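/- Let d ≥ 2. There exist functions L₁, L₂ : ℕ → ℕ, depending only on d and with L₁(N) → ∞ as N → ∞, such that for every N ≥ 1 and every Schwarz symmetric u : ℤ^d → [0,∞) with a_N(u) > 0: V◇_{L₁(N)} ⊆ {x : u(x) ≥ a_N(u)} and {x : u(x) > a_{N+1}(u)} ⊆ V□_{L₂(N)}. -/

import Mathlib

open Filter Topology

noncomputable section

abbrev ZLat (d : ℕ) := Fin d → ℤ

def stdVec (d : ℕ) (i : Fin d) : Fin d → ℝ := fun j => if j = i then 1 else 0

/-- The set of directions E⃗ ⊆ ℝ^d. -/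
def Evec (d : ℕ) : Set (Fin d → ℝ) :=
  {e | (∃ i, e = stdVec d i) ∨
    (∃ i j : Fin d, i < j ∧ e = fun k => (stdVec d i k + stdVec d j k) / 2) ∨
    (∃ i j : Fin d, i < j ∧ e = fun k => (stdVec d i k - stdVec d j k) / 2)}

/-- A fixed enumeration of E⃗ (for d = 2 it is e₁, e₂, (e₁+e₂)/2, (e₁-e₂)/2). -/
def EvecList (d : ℕ) : List (Fin d → ℝ) :=
  ((List.finRange d).map (stdVec d)) ++
  ((List.finRange d).flatMap fun i => (List.finRange d).filterMap fun j =>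
    if i < j then some (fun k => (stdVec d i k + stdVec d j k) / 2) else none) ++
  ((List.finRange d).flatMap fun i => (List.finRange d).filterMap fun j =>
    if i < j then some (fun k => (stdVec d i k - stdVec d j k) / 2) else none)

/-- The n-th largest value of `u`, counted with multiplicity (1-indexed). -/
def nthLargest {α : Type*} (u : α → NNReal) (n : ℕ) : NNReal :=
  sSup {t | ∃ Ω : Finset α, Ω.card = n ∧ ∀ x ∈ Ω, t ≤ u x}

/-- The 1-indexed position of the point with doubled coordinate `m` in the
spiral order 0, 1, −1, 2, −2, … (for even m) resp. 1/2, −1/2, 3/2, −3/2, … (for odd m). -/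
def posIdx (m : ℤ) : ℕ := (if 0 < m then m else 1 - m).toNat

/-- `x` and `y` lie on a common line with direction `e`. -/
def sameLine {d : ℕ} (e : Fin d → ℝ) (x y : ZLat d) : Prop :=
  ∃ c : ℝ, (fun i => (x i : ℝ) - (y i : ℝ)) = c • e

/-- Twice the inner product ⟨e, x⟩, as an integer. -/
def pairing {d : ℕ} (e : Fin d → ℝ) (x : ZLat d) : ℤ :=
  ⌊2 * ∑ i, e i * (x i : ℝ)⌋

/-- One-step rearrangement `R_e`. -/
def stepR {d : ℕ} (e : Fin d → ℝ) (u : ZLat d → NNReal) : ZLat d → NNReal :=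
  fun x => nthLargest (fun y : {y : ZLat d // sameLine e x y} => u y.1) (posIdx (pairing e x))

/-- `R^k u` : k successive one-step rearrangements cycling through the fixed enumeration. -/
def iterR (d : ℕ) (u : ZLat d → NNReal) : ℕ → ZLat d → NNReal
  | 0 => u
  | k + 1 => stepR ((EvecList d).getD (k % (EvecList d).length) 0) (iterR d u k)

/-- The Schwarz rearrangement on ℤ^d : pointwise limit of `R^k u`. -/
def RZd (d : ℕ) (u : ZLat d → NNReal) : ZLat d → NNReal :=
  fun x => limUnder atTop fun k => iterR d u k x

def Admissible {α : Type*} (u : α → NNReal) : Prop :=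
  ∀ t : NNReal, 0 < t → {x | t < u x}.Finite

def Equimeasurable {α : Type*} (u v : α → NNReal) : Prop :=
  ∀ t : NNReal, 0 < t → Nonempty ({x | t < u x} ≃ {x | t < v x})

/-- Graph distance (ℓ¹ distance) on the lattice ℤ^d. -/
def latDist {d : ℕ} (x y : ZLat d) : ℕ := ∑ i, (x i - y i).natAbs

/-- The i-th standard basis vector of ℤ^d. -/
def latE {d : ℕ} (i : Fin d) : ZLat d := fun j => if j = i then 1 else 0

/-- ‖∇u‖_p^p : the p-Sobolev energy, summing over each edge {x, x+e_i} once. -/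
def gradEnergy (d : ℕ) (p : ℝ) (u : ZLat d → NNReal) : ENNReal :=
  ∑' (x : ZLat d) (i : Fin d), ENNReal.ofReal (|(u (x + latE i) : ℝ) - (u x : ℝ)| ^ p)

/-- ‖∇u‖_p. -/
def gradNorm (d : ℕ) (p : ℝ) (u : ZLat d → NNReal) : ENNReal :=
  gradEnergy d p u ^ (1 / p)

/-- Graph automorphism of the lattice graph ℤ^d. -/
def IsLatAuto {d : ℕ} (σ : ZLat d ≃ ZLat d) : Prop :=
  ∀ x y : ZLat d, latDist (σ x) (σ y) = 1 ↔ latDist x y = 1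

def Supermodular (G : NNReal → NNReal → NNReal) : Prop :=
  ∀ s t s₀ t₀ : NNReal, G (s + s₀) t + G s (t + t₀) ≤ G (s + s₀) (t + t₀) + G s t

def StrictlySupermodular (G : NNReal → NNReal → NNReal) : Prop :=
  ∀ s t s₀ t₀ : NNReal, 0 < s₀ → 0 < t₀ →
    G (s + s₀) t + G s (t + t₀) < G (s + s₀) (t + t₀) + G s t

/-- The values of `u` are strictly decreasing: a₁ > a₂ > a₃ > ⋯ . -/
def StrictRan {α : Type*} (u : α → NNReal) : Prop :=
  ∀ n : ℕ, 0 < n → nthLargest u (n + 1) < nthLargest u n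


def VdiaI (d : ℕ) (l : ℤ) : Set (ZLat d) := {y | (∑ i, (y i).natAbs : ℤ) ≤ l}

def VboxI (d : ℕ) (l : ℤ) : Set (ZLat d) := {y | ∀ i, |y i| ≤ l}

/-!
A one-step rearrangement acts on every strict superlevel set by pushing it, along each line in the
given direction, to the initial positions of the spiral order. That order is the order of the
distances to a fixed point near the origin, whose inner products with all directions are positive
and small. So each step strictly decreases the total squared distance of a finite superlevel set to
this point unless it fixes the set, and every superlevel set is eventually constant. Hence the
superlevel sets of a Schwarz symmetric function contain, with a point, everything that precedes it
on the lines through it.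

Let `B` be such a set and `x ∈ B`. Moving along `e_i`, the `i`-th coordinate of `x` can be replaced
by any number of smaller absolute value, so `B` has at least `|x i|` points; this bounds `B`. Moving
along `e_i ± e_j`, the mass of the `i`-th coordinate can be traded for other coordinates as long as
the `i`-th one stays dominant, so `B` contains all `y` with `‖y‖₁ < |x i|`; if `B` has many points,
some `|x i|` is large.
-/

/-! ### Compression along fibers -/

section Compression

variable {X Q : Type*} {q : X → Q} {pos φ : X → ℕ}

/-- The one-step rearrangement of a set: in every fiber of `q`, the points of `A` are replaced by
equally many points of the fiber, those in the positions `1, 2, …`. Superlevel sets of `stepR e u`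
arise in this way, the fibers being the lines in direction `e`. -/
def compress (q : X → Q) (pos : X → ℕ) (A : Set X) : Set X :=
  {x | (pos x : ℕ∞) ≤ {y ∈ A | q y = q x}.encard}

lemma mem_of_compress_eq {A : Set X} (hA : compress q pos A = A) {x y : X} (hxy : q x = q y)
    (hpos : pos y ≤ pos x) (hx : x ∈ A) : y ∈ A := by
  rw [← hA] at hx ⊢
  calc (pos y : ℕ∞) ≤ pos x := by exact_mod_cast hpos
    _ ≤ {z ∈ A | q z = q x}.encard := hx
    _ = {z ∈ A | q z = q y}.encard := by rw [hxy]

lemma finite_compress (hpos : ∀ x, pos x ≠ 0)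
    (hinj : ∀ x y, q x = q y → pos x = pos y → x = y) {A : Set X} (hA : A.Finite) :
    (compress q pos A).Finite := by
  have hfib (y : X) : {x | q y = q x ∧ pos x ≤ A.ncard}.Finite :=
    Set.Finite.of_finite_image
      ((Set.finite_Iic A.ncard).subset (Set.image_subset_iff.2 fun _ h ↦ h.2))
      fun x hx x' hx' h ↦ hinj x x' (hx.1.symm.trans hx'.1) h
  refine (hA.biUnion fun y _ ↦ hfib y).subset fun x (hx : (pos x : ℕ∞) ≤ _) ↦ ?_
  obtain ⟨y, hyA, hyx⟩ : {y ∈ A | q y = q x}.Nonempty := by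
    rw [← Set.one_le_encard_iff_nonempty]
    exact le_trans (by exact_mod_cast Nat.one_le_iff_ne_zero.2 (hpos x)) hx
  refine Set.mem_biUnion hyA ⟨hyx, ?_⟩
  have := hx.trans (Set.encard_le_encard (Set.sep_subset A _))
  rw [← hA.cast_ncard_eq] at this
  exact_mod_cast this

lemma sum_lt_sum_of_forall_lt_of_mem_sdiff [DecidableEq X] (hφ : ∀ x, 0 < φ x) {B C : Finset X}
    (hcard : B.card ≤ C.card) (hne : B ≠ C) (hlt : ∀ b ∈ B \ C, ∀ c ∈ C \ B, φ b < φ c) :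
    ∑ x ∈ B, φ x < ∑ x ∈ C, φ x := by
  have hnonempty : (C \ B).Nonempty := by
    rw [Finset.sdiff_nonempty]
    exact fun hCB ↦ hne (Finset.eq_of_subset_of_card_le hCB hcard).symm
  have hcard' : (B \ C).card ≤ (C \ B).card := Finset.card_sdiff_le_card_sdiff_iff.2 hcard
  rw [← Finset.sum_sdiff_lt_sum_sdiff]
  set m := (B \ C).sup φ
  have hmlt : ∀ c ∈ C \ B, m + 1 ≤ φ c := fun c hc ↦
    (Finset.sup_lt_iff (hφ c)).2 fun b hb ↦ hlt b hb c hc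
  calc ∑ x ∈ B \ C, φ x ≤ (B \ C).card * m :=
        Finset.sum_le_card_nsmul _ _ _ fun b hb ↦ Finset.le_sup hb
    _ ≤ (C \ B).card * m := Nat.mul_le_mul_right m hcard'
    _ < (C \ B).card * (m + 1) := Nat.mul_lt_mul_of_pos_left m.lt_succ_self hnonempty.card_pos
    _ ≤ ∑ x ∈ C \ B, φ x := Finset.card_nsmul_le_sum _ _ _ hmlt

lemma sum_fiber_lt_sum_fiber_of_compress [DecidableEq Q] (hpos : ∀ x, pos x ≠ 0)
    (hinj : ∀ x y, q x = q y → pos x = pos y → x = y) (hφ : ∀ x, 0 < φ x)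
    (hmono : ∀ x y, q x = q y → pos x < pos y → φ x < φ y) {A A' : Finset X}
    (hA' : compress q pos (A : Set X) = A') (c : Q)
    (hne : {x ∈ A' | q x = c} ≠ {x ∈ A | q x = c}) :
    ∑ x ∈ A' with q x = c, φ x < ∑ x ∈ A with q x = c, φ x := by
  classical
  have hmem (x : X) (hx : q x = c) : x ∈ A' ↔ pos x ≤ {y ∈ A | q y = c}.card := by
    rw [← Finset.mem_coe, ← hA', ← Nat.cast_le (α := ℕ∞), ← Set.encard_coe_eq_coe_finsetCard,
      Finset.coe_filter, ← hx]
    rfl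
  refine sum_lt_sum_of_forall_lt_of_mem_sdiff hφ ?_ hne fun b hb c' hc' ↦ ?_
  · calc {x ∈ A' | q x = c}.card ≤ (Finset.Icc 1 {y ∈ A | q y = c}.card).card := by
          refine Finset.card_le_card_of_injOn pos (fun x hx ↦ ?_) fun x hx y hy h ↦ ?_
          · obtain ⟨hxA, hxc⟩ := Finset.mem_filter.1 hx
            exact Finset.mem_Icc.2 ⟨Nat.one_le_iff_ne_zero.2 (hpos x), (hmem x hxc).1 hxA⟩
          · exact hinj x y ((Finset.mem_filter.1 hx).2.trans (Finset.mem_filter.1 hy).2.symm) h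
      _ = {y ∈ A | q y = c}.card := by simp
  · simp only [Finset.mem_sdiff, Finset.mem_filter, not_and'] at hb hc'
    obtain ⟨⟨hbA, hbc⟩, -⟩ := hb
    obtain ⟨⟨-, hcc⟩, hcA⟩ := hc'
    rw [hmem b hbc] at hbA
    have hcpos := mt (hmem c' hcc).2 (hcA hcc)
    exact hmono b c' (hbc.trans hcc.symm) (hbA.trans_lt (not_le.1 hcpos))

lemma finsum_compress_lt (hpos : ∀ x, pos x ≠ 0)
    (hinj : ∀ x y, q x = q y → pos x = pos y → x = y) (hφ : ∀ x, 0 < φ x)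
    (hmono : ∀ x y, q x = q y → pos x < pos y → φ x < φ y) {A : Set X} (hA : A.Finite)
    (hne : compress q pos A ≠ A) : ∑ᶠ x ∈ compress q pos A, φ x < ∑ᶠ x ∈ A, φ x := by
  classical
  obtain ⟨A', hA'⟩ := (finite_compress hpos hinj hA).exists_finset_coe
  lift A to Finset X using hA
  have hfiber := sum_fiber_lt_sum_fiber_of_compress hpos hinj hφ hmono hA'.symm
  rw [← hA'] at hne ⊢
  obtain ⟨x, hx⟩ : ∃ x, ¬(x ∈ A' ↔ x ∈ A) := by
    simpa only [ne_eq, Finset.coe_inj, Finset.ext_iff, not_forall] using hne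
  rw [finsum_mem_coe_finset, finsum_mem_coe_finset,
    ← Finset.sum_fiberwise_of_maps_to (t := (A' ∪ A).image q) (g := q)
      fun y hy ↦ Finset.mem_image_of_mem q (Finset.mem_union_left A hy),
    ← Finset.sum_fiberwise_of_maps_to (s := A) (t := (A' ∪ A).image q) (g := q)
      fun y hy ↦ Finset.mem_image_of_mem q (Finset.mem_union_right A' hy)]
  refine Finset.sum_lt_sum (fun c _ ↦ ?_) ⟨q x, Finset.mem_image_of_mem q ?_, hfiber (q x) ?_⟩
  · rcases eq_or_ne {y ∈ A' | q y = c} {y ∈ A | q y = c} with h | h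
    · rw [h]
    · exact (hfiber c h).le
  · rw [Finset.mem_union]
    tauto
  · intro h
    simpa [hx] using Finset.ext_iff.1 h x

end Compression

/-! ### The n-th largest value -/

section NthLargest

variable {α : Type*} {u : α → NNReal} {n : ℕ}

lemma mem_upperBounds_of_forall_le {M : NNReal} (hM : ∀ x, u x ≤ M) (hn : n ≠ 0) :
    M ∈ upperBounds {t | ∃ Ω : Finset α, Ω.card = n ∧ ∀ x ∈ Ω, t ≤ u x} := by
  rintro t ⟨Ω, hcard, ht⟩
  obtain ⟨x, hx⟩ : Ω.Nonempty := Finset.card_ne_zero.1 (hcard ▸ hn)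
  exact (ht x hx).trans (hM x)

lemma nthLargest_le {M : NNReal} (hM : ∀ x, u x ≤ M) (hn : n ≠ 0) : nthLargest u n ≤ M :=
  csSup_le' (mem_upperBounds_of_forall_le hM hn)

lemma lt_nthLargest_iff (hu : BddAbove (Set.range u)) (hn : n ≠ 0) {t : NNReal} :
    t < nthLargest u n ↔ (n : ℕ∞) ≤ {x | t < u x}.encard := by
  constructor
  · intro ht
    obtain ⟨s, ⟨Ω, hcard, hs⟩, hts⟩ := exists_lt_of_lt_csSup' ht
    rw [← hcard, ← Set.encard_coe_eq_coe_finsetCard]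
    exact Set.encard_le_encard fun x hx ↦ hts.trans_le (hs x hx)
  · intro h
    obtain ⟨T, hT, hTn⟩ := Set.exists_subset_encard_eq h
    lift T to Finset α using Set.finite_of_encard_eq_coe hTn
    rw [Set.encard_coe_eq_coe_finsetCard, Nat.cast_inj] at hTn
    have hne : T.Nonempty := Finset.card_ne_zero.1 (hTn ▸ hn)
    obtain ⟨M, hM⟩ := hu
    calc t < T.inf' hne u := (Finset.lt_inf'_iff hne).2 hT
      _ ≤ nthLargest u n := le_csSup
        ⟨M, mem_upperBounds_of_forall_le (fun x ↦ hM (Set.mem_range_self x)) hn⟩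
        ⟨T, hTn, fun x hx ↦ Finset.inf'_le u hx⟩

lemma Admissible.bddAbove_range (hu : Admissible u) : BddAbove (Set.range u) := by
  refine (((hu 1 one_pos).image u).bddAbove.union (bddAbove_Iic (a := 1))).mono ?_
  rintro _ ⟨x, rfl⟩
  rcases lt_or_ge 1 (u x) with hx | hx
  · exact Or.inl ⟨x, hx, rfl⟩
  · exact Or.inr hx

end NthLargest

/-! ### Directions -/

lemma posIdx_ne_zero (m : ℤ) : posIdx m ≠ 0 := by
  unfold posIdx
  split_ifs <;> omega

lemma eq_zero_of_posIdx_add_two_mul_eq {p s : ℤ} (h : posIdx (p + 2 * s) = posIdx p) : s = 0 := by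
  unfold posIdx at h
  split_ifs at h <;> omega

lemma posIdx_le_of_abs_lt {p q : ℤ} (h : |p| < |q|) : posIdx p ≤ posIdx q := by
  unfold posIdx
  rcases abs_cases p with hp | hp <;> rcases abs_cases q with hq | hq <;> split_ifs <;> omega

-- The spiral order is the order of the distances to a point slightly to the right of the origin.
lemma sub_mul_pos_of_posIdx_lt {M w p q : ℤ} (hw : 0 < w) (hwM : w < M)
    (h : posIdx p < posIdx q) : 0 < (q - p) * (M * (q + p) - w) := by
  rcases lt_trichotomy p q with hpq | rfl | hpq
  · have : 1 ≤ q + p := by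
      unfold posIdx at h
      split_ifs at h <;> omega
    exact mul_pos (by omega) (by nlinarith)
  · exact absurd h (lt_irrefl _)
  · have : q + p ≤ 0 := by
      unfold posIdx at h
      split_ifs at h <;> omega
    exact mul_pos_of_neg_of_neg (by omega) (by nlinarith)

section Directions

variable {d : ℕ} {e : Fin d → ℝ} {a : ZLat d} {g : ℤ}

lemma sameLine_equivalence (e : Fin d → ℝ) : Equivalence (sameLine (d := d) e) where
  refl x := by
    refine ⟨0, ?_⟩
    rw [zero_smul]
    exact funext fun i ↦ sub_self _
  symm := by
    rintro x y ⟨c, hc⟩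
    refine ⟨-c, ?_⟩
    rw [neg_smul, ← hc]
    exact funext fun i ↦ (neg_sub _ _).symm
  trans := by
    rintro x y z ⟨c, hc⟩ ⟨c', hc'⟩
    refine ⟨c + c', ?_⟩
    rw [add_smul, ← hc, ← hc']
    exact funext fun i ↦ (sub_add_sub_cancel _ _ _).symm

/-- The line in direction `e` through a lattice point, as an equivalence class. -/
def lineOf (e : Fin d → ℝ) : ZLat d → Quotient ⟨sameLine (d := d) e, sameLine_equivalence e⟩ :=
  Quotient.mk _

lemma lineOf_eq_iff {x y : ZLat d} : lineOf e x = lineOf e y ↔ sameLine e x y :=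
  Quotient.eq

/-- `e = (g / 2) a` for an integer vector `a` that generates the lattice points of the line `ℝ e`,
normalized so that `2⟨e, ·⟩` increases by `2` along `a`. -/
structure IsLatticeDir (e : Fin d → ℝ) (a : ZLat d) (g : ℤ) : Prop where
  apply_eq : ∀ k, e k = g / 2 * a k
  exists_eq_one : ∃ i, a i = 1
  mul_dotProduct_self : g * (a ⬝ᵥ a) = 2

namespace IsLatticeDir

lemma pos (h : IsLatticeDir e a g) : 0 < g := by
  have : 0 ≤ a ⬝ᵥ a := Finset.sum_nonneg fun i _ ↦ mul_self_nonneg (a i)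
  exact pos_of_mul_pos_left (by rw [h.mul_dotProduct_self]; norm_num) this

lemma sameLine_iff (h : IsLatticeDir e a g) {x y : ZLat d} :
    sameLine e x y ↔ ∃ s : ℤ, x = y + s • a := by
  obtain ⟨i, hi⟩ := h.exists_eq_one
  constructor
  · rintro ⟨c, hc⟩
    have hcoord (k : Fin d) : (x k : ℝ) - y k = c * (g / 2 * a k) := by
      rw [← h.apply_eq]
      exact congrFun hc k
    have hi' : (x i : ℝ) - y i = c * (g / 2) := by simpa [hi] using hcoord i
    refine ⟨x i - y i, funext fun k ↦ ?_⟩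
    have : (x k : ℝ) = y k + (x i - y i) * a k := by linear_combination hcoord k - a k * hi'
    exact_mod_cast this
  · rintro ⟨s, rfl⟩
    refine ⟨2 * s / g, funext fun k ↦ ?_⟩
    have hg : (g : ℝ) ≠ 0 := by exact_mod_cast h.pos.ne'
    simp only [Pi.add_apply, Pi.smul_apply, smul_eq_mul, h.apply_eq]
    push_cast
    field_simp
    ring

lemma pairing_eq (h : IsLatticeDir e a g) (x : ZLat d) : pairing e x = g * (a ⬝ᵥ x) := by
  have : 2 * ∑ i, e i * (x i : ℝ) = ((g * (a ⬝ᵥ x) : ℤ) : ℝ) := by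
    simp only [dotProduct, h.apply_eq, Int.cast_mul, Int.cast_sum, Finset.mul_sum]
    exact Finset.sum_congr rfl fun k _ ↦ by ring
  rw [pairing, this, Int.floor_intCast]

lemma pairing_add_smul (h : IsLatticeDir e a g) (x : ZLat d) (s : ℤ) :
    pairing e (x + s • a) = pairing e x + 2 * s := by
  simp only [h.pairing_eq, dotProduct_add, dotProduct_smul, smul_eq_mul]
  linear_combination s * h.mul_dotProduct_self

lemma eq_of_posIdx_eq (h : IsLatticeDir e a g) {x y : ZLat d} (hxy : sameLine e x y)
    (hpos : posIdx (pairing e x) = posIdx (pairing e y)) : x = y := by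
  obtain ⟨s, rfl⟩ := h.sameLine_iff.1 hxy
  rw [h.pairing_add_smul] at hpos
  rw [eq_zero_of_posIdx_add_two_mul_eq hpos, zero_smul, add_zero]

end IsLatticeDir

lemma mem_evec_iff : e ∈ Evec d ↔ (∃ i, e = stdVec d i) ∨
    ∃ i j : Fin d, i < j ∧ ∃ ε : ℤ, (ε = 1 ∨ ε = -1) ∧
      e = fun k ↦ (stdVec d i k + ε * stdVec d j k) / 2 := by
  simp only [Evec, Set.mem_ofPred_eq, or_and_right, exists_or, exists_eq_left, and_or_left,
    Int.cast_one, Int.cast_neg, one_mul, neg_mul, ← sub_eq_add_neg]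

lemma isLatticeDir_stdVec (i : Fin d) : IsLatticeDir (stdVec d i) (Pi.single i 1) 2 where
  apply_eq k := by simp [stdVec, Pi.single_apply]
  exists_eq_one := ⟨i, by simp⟩
  mul_dotProduct_self := by simp

lemma isLatticeDir_add_mul {i j : Fin d} (hij : i ≠ j) {ε : ℤ} (hε : ε = 1 ∨ ε = -1) :
    IsLatticeDir (fun k ↦ (stdVec d i k + ε * stdVec d j k) / 2)
      (Pi.single i 1 + ε • Pi.single j 1) 1 where
  apply_eq k := by
    simp only [stdVec, Pi.add_apply, Pi.smul_apply, Pi.single_apply, smul_eq_mul]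
    push_cast
    ring
  exists_eq_one := ⟨i, by simp [hij]⟩
  mul_dotProduct_self := by rcases hε with rfl | rfl <;> simp [hij, hij.symm]

lemma exists_isLatticeDir (he : e ∈ Evec d) : ∃ a g, IsLatticeDir e a g := by
  obtain ⟨i, rfl⟩ | ⟨i, j, hij, ε, hε, rfl⟩ := mem_evec_iff.1 he
  · exact ⟨_, _, isLatticeDir_stdVec i⟩
  · exact ⟨_, _, isLatticeDir_add_mul hij.ne hε⟩

/-! ### A weight that decreases under rearrangement -/

/-- A vector with strictly decreasing positive coordinates, hence with positive inner product with
every direction in `Evec d`. -/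
def tilt (d : ℕ) : ZLat d := fun i ↦ d - i

lemma pairing_tilt_mem_Ioc (he : e ∈ Evec d) : pairing e (tilt d) ∈ Set.Ioc 0 (2 * d : ℤ) := by
  obtain ⟨i, rfl⟩ | ⟨i, j, hij, ε, hε, rfl⟩ := mem_evec_iff.1 he
  · simp only [(isLatticeDir_stdVec i).pairing_eq, single_dotProduct, tilt, Set.mem_Ioc]
    omega
  · simp only [(isLatticeDir_add_mul hij.ne hε).pairing_eq, add_dotProduct, smul_dotProduct,
      single_dotProduct, tilt, Set.mem_Ioc, smul_eq_mul]
    rcases hε with rfl | rfl <;> omega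

/-- The squared distance of `(4 * d + 1) x` to `tilt d`, i.e. up to a factor the squared distance of
`x` to `tilt d / (4 * d + 1)`, a point so close to the origin that on every line in a direction of
`Evec d` the distances to it are ordered like the spiral order. -/
def sqDistTilt (x : ZLat d) : ℤ :=
  ((4 * d + 1 : ℤ) • x - tilt d) ⬝ᵥ ((4 * d + 1 : ℤ) • x - tilt d)

/-- `sqDistTilt` as a positive natural number, to be summed over finite sets. The total is a
Lyapunov function for the rearrangements of sets. -/
def weight (x : ZLat d) : ℕ := (sqDistTilt x).toNat + 1

lemma sqDistTilt_nonneg (x : ZLat d) : 0 ≤ sqDistTilt x := by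
  unfold sqDistTilt
  exact Finset.sum_nonneg fun _ _ ↦ mul_self_nonneg _

lemma IsLatticeDir.mul_sqDistTilt_add_smul (h : IsLatticeDir e a g) (x : ZLat d) (s : ℤ) :
    g * sqDistTilt (x + s • a) = g * sqDistTilt x + (4 * d + 1) * (s *
      ((4 * d + 1) * (pairing e (x + s • a) + pairing e x) - 2 * pairing e (tilt d))) := by
  simp only [sqDistTilt, h.pairing_eq, add_dotProduct, dotProduct_add, sub_dotProduct,
    dotProduct_sub, smul_dotProduct, dotProduct_smul, smul_eq_mul, dotProduct_comm x a,
    dotProduct_comm (tilt d) a, dotProduct_comm (tilt d) x]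
  ring

lemma weight_lt_of_posIdx_lt (he : e ∈ Evec d) {x y : ZLat d} (hxy : sameLine e x y)
    (hpos : posIdx (pairing e x) < posIdx (pairing e y)) : weight x < weight y := by
  obtain ⟨a, g, h⟩ := exists_isLatticeDir he
  obtain ⟨s, rfl⟩ := h.sameLine_iff.1 ((sameLine_equivalence e).symm hxy)
  obtain ⟨htilt, htilt'⟩ := pairing_tilt_mem_Ioc he
  have hquad : 0 < s * ((4 * d + 1) * (pairing e (x + s • a) + pairing e x)
      - 2 * pairing e (tilt d)) := by
    have := sub_mul_pos_of_posIdx_lt (M := 4 * d + 1) (w := 2 * pairing e (tilt d))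
      (by omega) (by omega) hpos
    rw [show pairing e (x + s • a) - pairing e x = 2 * s by rw [h.pairing_add_smul]; ring,
      mul_assoc] at this
    omega
  have hlt : sqDistTilt x < sqDistTilt (x + s • a) := by
    refine lt_of_mul_lt_mul_left ?_ h.pos.le
    rw [h.mul_sqDistTilt_add_smul]
    exact lt_add_of_pos_right _ (mul_pos (by positivity) hquad)
  have := sqDistTilt_nonneg x
  unfold weight
  omega

end Directions

/-! ### Convergence of the iterated rearrangements -/

lemma eventuallyConst_of_lt_of_ne {S : Type*} {A : ℕ → S} {P : S → ℕ}
    (h : ∀ k, A (k + 1) ≠ A k → P (A (k + 1)) < P (A k)) : EventuallyConst A atTop := by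
  have hanti : Antitone (P ∘ A) := antitone_nat_of_succ_le fun k ↦ by
    rcases eq_or_ne (A (k + 1)) (A k) with hk | hk
    · exact (congrArg P hk).le
    · exact (h k hk).le
  obtain ⟨K, hK⟩ := WellFoundedLT.antitone_chain_condition hanti
  refine eventuallyConst_atTop_nat.2 ⟨K, fun k hk ↦ by_contra fun hne ↦ (h k hne).ne ?_⟩
  exact (hK (k + 1) (by omega)).symm.trans (hK k hk)

section Dynamics

variable {d : ℕ} {e : Fin d → ℝ} {u v : ZLat d → NNReal}

/-- The rearrangement of a set along the lines in direction `e`, in the spiral order. -/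
def compressDir (e : Fin d → ℝ) : Set (ZLat d) → Set (ZLat d) :=
  compress (lineOf e) fun x ↦ posIdx (pairing e x)

lemma setOf_lt_stepR (hv : BddAbove (Set.range v)) (e : Fin d → ℝ) (t : NNReal) :
    {x | t < stepR e v x} = compressDir e {x | t < v x} := by
  ext x
  rw [Set.mem_ofPred_eq, stepR, lt_nthLargest_iff (u := fun y : {y // sameLine e x y} ↦ v y)
    (hv.mono (Set.range_comp_subset_range _ v)) (posIdx_ne_zero _),
    ← Subtype.val_injective.encard_image]
  have hfiber : Subtype.val '' {y : {y // sameLine e x y} | t < v y} =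
      {y ∈ {y | t < v y} | lineOf e y = lineOf e x} := by
    ext y
    simp [← lineOf_eq_iff, and_comm, eq_comm (a := lineOf e x)]
  rw [hfiber]
  rfl

lemma eq_of_lineOf_eq_of_posIdx_eq (he : e ∈ Evec d) (x y : ZLat d)
    (hxy : lineOf e x = lineOf e y) (hpos : posIdx (pairing e x) = posIdx (pairing e y)) :
    x = y := by
  obtain ⟨a, g, h⟩ := exists_isLatticeDir he
  exact h.eq_of_posIdx_eq (lineOf_eq_iff.1 hxy) hpos

lemma finsum_weight_compressDir_lt (he : e ∈ Evec d) {A : Set (ZLat d)} (hA : A.Finite)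
    (hne : compressDir e A ≠ A) : ∑ᶠ x ∈ compressDir e A, weight x < ∑ᶠ x ∈ A, weight x :=
  finsum_compress_lt (fun _ ↦ posIdx_ne_zero _) (eq_of_lineOf_eq_of_posIdx_eq he)
    (fun _ ↦ Nat.succ_pos _) (fun _ _ hxy ↦ weight_lt_of_posIdx_lt he (lineOf_eq_iff.1 hxy)) hA hne

lemma Admissible.stepR (hu : Admissible u) (he : e ∈ Evec d) : Admissible (stepR e u) := by
  intro t ht
  rw [setOf_lt_stepR hu.bddAbove_range]
  exact finite_compress (fun _ ↦ posIdx_ne_zero _) (eq_of_lineOf_eq_of_posIdx_eq he) (hu t ht)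

lemma mem_evecList_iff : e ∈ EvecList d ↔ e ∈ Evec d := by
  simp only [EvecList, Evec, List.mem_append, List.mem_map, List.mem_flatMap, List.mem_filterMap,
    List.mem_finRange, true_and, Set.mem_ofPred_eq, Option.ite_none_right_eq_some,
    Option.some.injEq, eq_comm (b := e), or_assoc]

/-- The direction of the `k`-th rearrangement step in `iterR`. -/
def cycleDir (d k : ℕ) : Fin d → ℝ := (EvecList d).getD (k % (EvecList d).length) 0

lemma iterR_le {M : NNReal} (hM : ∀ x, u x ≤ M) (k : ℕ) (x : ZLat d) : iterR d u k x ≤ M := by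
  induction k generalizing x with
  | zero => exact hM x
  | succ k ih => exact nthLargest_le (fun y ↦ ih y) (posIdx_ne_zero _)

lemma exists_ge_cycleDir_eq (he : e ∈ Evec d) (K : ℕ) : ∃ k ≥ K, cycleDir d k = e := by
  obtain ⟨n, hn, rfl⟩ := List.mem_iff_getElem.1 (mem_evecList_iff.2 he)
  refine ⟨n + (EvecList d).length * K, ?_, ?_⟩
  · have := Nat.le_mul_of_pos_left K (Nat.zero_lt_of_lt hn)
    omega
  · rw [cycleDir, Nat.add_mul_mod_self_left, Nat.mod_eq_of_lt hn, List.getD_eq_getElem _ _ hn]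

variable [NeZero d]

lemma cycleDir_mem (k : ℕ) : cycleDir d k ∈ Evec d := by
  have hne : EvecList d ≠ [] := List.ne_nil_of_mem (mem_evecList_iff.2 (Or.inl ⟨0, rfl⟩))
  have hlt := Nat.mod_lt k (List.length_pos_iff.2 hne)
  rw [← mem_evecList_iff, cycleDir, List.getD_eq_getElem _ _ hlt]
  exact List.getElem_mem hlt

lemma Admissible.iterR (hu : Admissible u) (k : ℕ) : Admissible (iterR d u k) := by
  induction k with
  | zero => exact hu
  | succ k ih => exact ih.stepR (cycleDir_mem k)

lemma setOf_lt_iterR_succ (hu : Admissible u) (t : NNReal) (k : ℕ) :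
    {x | t < iterR d u (k + 1) x} = compressDir (cycleDir d k) {x | t < iterR d u k x} :=
  setOf_lt_stepR (hu.iterR k).bddAbove_range _ t

lemma exists_eventually_setOf_lt_iterR_eq (hu : Admissible u) {t : NNReal} (ht : 0 < t) :
    ∃ A : Set (ZLat d), (∀ᶠ k in atTop, {x | t < iterR d u k x} = A) ∧
      ∀ e ∈ Evec d, compressDir e A = A := by
  have hconst : EventuallyConst (fun k ↦ {x | t < iterR d u k x}) atTop := by
    refine eventuallyConst_of_lt_of_ne (P := fun A ↦ ∑ᶠ x ∈ A, weight x) fun k hk ↦ ?_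
    rw [setOf_lt_iterR_succ hu] at hk ⊢
    exact finsum_weight_compressDir_lt (cycleDir_mem k) (hu.iterR k t ht) hk
  obtain ⟨A, hA⟩ := eventuallyConst_iff_exists_eventuallyEq.1 hconst
  obtain ⟨K, hK : ∀ k ≥ K, {x | t < iterR d u k x} = A⟩ := eventually_atTop.1 hA
  refine ⟨A, hA, fun e he ↦ ?_⟩
  obtain ⟨k, hk, rfl⟩ := exists_ge_cycleDir_eq he K
  calc compressDir (cycleDir d k) A
      = compressDir (cycleDir d k) {x | t < iterR d u k x} := by rw [hK k hk]
    _ = {x | t < iterR d u (k + 1) x} := (setOf_lt_iterR_succ hu t k).symm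
    _ = A := hK (k + 1) (by omega)

lemma tendsto_iterR (hu : Admissible u) (x : ZLat d) :
    Tendsto (iterR d u · x) atTop (𝓝 (RZd d u x)) := by
  obtain ⟨M, hM⟩ := hu.bddAbove_range
  refine tendsto_nhds_limUnder (tendsto_of_no_upcrossings dense_univ ?_
    (isBoundedUnder_of ⟨M, fun k ↦ iterR_le (fun y ↦ hM (Set.mem_range_self y)) k x⟩)
    (isBoundedUnder_of ⟨0, fun _ ↦ zero_le⟩))
  rintro a - b - hab ⟨hlow, hhigh⟩
  obtain ⟨A, hA, -⟩ := exists_eventually_setOf_lt_iterR_eq hu (zero_le.trans_lt hab)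
  obtain ⟨k, hk, hkA⟩ := (hlow.and_eventually hA).exists
  obtain ⟨l, hl, hlA⟩ := (hhigh.and_eventually hA).exists
  have hbk : x ∈ {y | b < iterR d u k y} := by
    rw [hkA, ← hlA]
    exact hl
  exact (hk.trans hab).not_gt hbk

/-- A set that contains, with a point `x`, all points preceding `x` in the spiral order on some
line through `x` in a direction of `Evec d`. -/
def SpiralClosed (B : Set (ZLat d)) : Prop :=
  ∀ e ∈ Evec d, ∀ x y, sameLine e x y → posIdx (pairing e y) ≤ posIdx (pairing e x) →
    x ∈ B → y ∈ B

lemma spiralClosed_setOf_lt (hu : Admissible u) (hfix : RZd d u = u) (t : NNReal) :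
    SpiralClosed {x | t < u x} := by
  intro e he x y hxy hpos (hx : t < u x)
  obtain ⟨s, hts, hsx⟩ := exists_between hx
  obtain ⟨A, hA, hfixA⟩ := exists_eventually_setOf_lt_iterR_eq hu (zero_le.trans_lt hts)
  have hlim (z : ZLat d) : Tendsto (iterR d u · z) atTop (𝓝 (u z)) := by
    simpa only [hfix] using tendsto_iterR hu z
  have hxA : x ∈ A := by
    obtain ⟨k, hk, hkA⟩ := (((hlim x).eventually_const_lt hsx).and hA).exists
    rwa [← hkA]
  have hyA : y ∈ A := mem_of_compress_eq (hfixA e he) (lineOf_eq_iff.2 hxy) hpos hxA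
  have hsy : s ≤ u y := ge_of_tendsto (hlim y) <| hA.mono fun k hk ↦ by
    rw [← hk] at hyA
    exact le_of_lt hyA
  exact hts.trans_le hsy

end Dynamics

/-! ### The geometry of spiral closed sets -/

namespace SpiralClosed

variable {d : ℕ} {B : Set (ZLat d)} {x : ZLat d}

lemma add_smul_mem (hB : SpiralClosed B) {e : Fin d → ℝ} {a : ZLat d} {g : ℤ} (he : e ∈ Evec d)
    (h : IsLatticeDir e a g) {s : ℤ} (hs : |pairing e (x + s • a)| < |pairing e x|) (hx : x ∈ B) :
    x + s • a ∈ B :=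
  hB e he x _ (h.sameLine_iff.2 ⟨-s, by module⟩) (posIdx_le_of_abs_lt hs) hx

lemma update_mem (hB : SpiralClosed B) (hx : x ∈ B) {i : Fin d} {c : ℤ} (hc : |c| < |x i|) :
    Function.update x i c ∈ B := by
  have h := isLatticeDir_stdVec i
  have heq : Function.update x i c = x + (c - x i) • Pi.single i 1 := by
    ext k
    rcases eq_or_ne k i with rfl | hk <;> simp [*]
  rw [heq]
  refine hB.add_smul_mem (Or.inl ⟨i, rfl⟩) h ?_ hx
  rw [h.pairing_eq, h.pairing_eq, abs_mul, abs_mul]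
  simpa using hc

lemma update_zero_mem (hB : SpiralClosed B) (hx : x ∈ B) (i : Fin d) :
    Function.update x i 0 ∈ B := by
  rcases eq_or_ne (x i) 0 with h | h
  · rwa [← h, Function.update_eq_self]
  · exact hB.update_mem hx (by rwa [abs_zero, abs_pos])

lemma piecewise_zero_mem (hB : SpiralClosed B) (hx : x ∈ B) (S : Finset (Fin d)) :
    S.piecewise 0 x ∈ B := by
  induction S using Finset.induction_on with
  | empty => rwa [Finset.piecewise_empty]
  | insert i S _ ih =>
    rw [Finset.piecewise_insert]
    exact hB.update_zero_mem ih i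

lemma zero_mem (hB : SpiralClosed B) (hx : x ∈ B) : 0 ∈ B := by
  simpa using hB.piecewise_zero_mem hx Finset.univ

lemma single_mem (hB : SpiralClosed B) (hx : x ∈ B) (i : Fin d) : Pi.single i (x i) ∈ B := by
  convert hB.piecewise_zero_mem hx (Finset.univ.erase i) using 1
  ext k
  rcases eq_or_ne k i with rfl | hk <;> simp [*]

lemma add_smul_single_add_single_mem (hB : SpiralClosed B) (hx : x ∈ B) {i j : Fin d} (hij : i ≠ j)
    {ε : ℤ} (hε : ε = 1 ∨ ε = -1) {s : ℤ} (hs : |x i + ε * x j + 2 * s| < |x i + ε * x j|) :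
    x + s • (Pi.single i 1 + ε • Pi.single j 1) ∈ B := by
  wlog hlt : i < j generalizing i j s
  · have hsq : ε * ε = 1 := by rcases hε with rfl | rfl <;> rfl
    have habs (m : ℤ) : |ε * m| = |m| := by rcases hε with rfl | rfl <;> simp
    have hmove := this hij.symm (s := ε * s) (by
      rw [← habs (x i + ε * x j + 2 * s), ← habs (x i + ε * x j)] at hs
      convert hs using 2
      · linear_combination -x j * hsq
      · linear_combination -x j * hsq) (lt_of_le_of_ne (not_lt.1 hlt) hij.symm)
    convert hmove using 2
    linear_combination (-s * hsq) • (Pi.single i 1 : ZLat d)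
  have h := isLatticeDir_add_mul hij hε
  refine hB.add_smul_mem (mem_evec_iff.2 (Or.inr ⟨i, j, hlt, ε, hε, rfl⟩)) h ?_ hx
  rw [h.pairing_add_smul, h.pairing_eq]
  simpa only [add_dotProduct, smul_dotProduct, single_dotProduct, one_mul, smul_eq_mul] using hs

lemma transfer_mem (hB : SpiralClosed B) (hx : x ∈ B) {i j : Fin d} (hij : i ≠ j) (hj : x j = 0)
    {σ v : ℤ} (hσ : σ = 1 ∨ σ = -1) (hv : |v| < σ * x i) :
    x + (Pi.single j v - Pi.single i (σ * |v|)) ∈ B := by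
  obtain ⟨ε, hε, hεv⟩ : ∃ ε : ℤ, (ε = 1 ∨ ε = -1) ∧ -(ε * (σ * |v|)) = v := by
    rcases hσ with rfl | rfl <;> rcases abs_cases v with ⟨h, -⟩ | ⟨h, -⟩ <;> rw [h]
    exacts [⟨-1, by simp⟩, ⟨1, by simp⟩, ⟨1, by simp⟩, ⟨-1, by simp⟩]
  rcases eq_or_ne v 0 with rfl | hv0
  · simpa using hx
  have hmove := hB.add_smul_single_add_single_mem hx hij hε (s := -(σ * |v|)) <| by
    have := abs_pos.2 hv0
    rw [hj, mul_zero, add_zero]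
    rcases hσ with rfl | rfl
    · rw [abs_lt, abs_of_pos (by omega)]
      omega
    · rw [abs_lt, abs_of_neg (by omega)]
      omega
  convert hmove using 2
  ext k
  simp only [Pi.sub_apply, Pi.smul_apply, Pi.add_apply, Pi.single_apply, smul_eq_mul]
  split_ifs <;> linarith

lemma single_add_piecewise_mem (hB : SpiralClosed B) {i : Fin d} {c σ : ℤ}
    (hc : Pi.single i c ∈ B) (hσ : σ = 1 ∨ σ = -1) (y : ZLat d) {S : Finset (Fin d)} (hi : i ∉ S)
    (hsum : ∑ j ∈ S, |y j| < σ * c) :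
    Pi.single i (c - σ * ∑ j ∈ S, |y j|) + S.piecewise y 0 ∈ B := by
  have hσσ : σ * σ = 1 := by rcases hσ with rfl | rfl <;> rfl
  induction S using Finset.induction_on with
  | empty => simpa using hc
  | insert j S hjS ih =>
    obtain ⟨hij, hiS⟩ : i ≠ j ∧ i ∉ S := by simpa using hi
    rw [Finset.sum_insert hjS] at hsum ⊢
    set r := ∑ j ∈ S, |y j|
    have hmem := ih hiS (by linarith [abs_nonneg (y j)])
    have htransfer := hB.transfer_mem hmem hij (by simp [hij, hjS]) hσ (v := y j) <| by
      simp only [Pi.add_apply, Pi.single_eq_same, Finset.piecewise_eq_of_notMem _ _ _ hiS,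
        Pi.zero_apply, add_zero]
      linear_combination hsum + r * hσσ
    convert htransfer using 1
    ext k
    rcases eq_or_ne k j with rfl | hkj
    · simp [hij.symm, hjS]
    rcases eq_or_ne k i with rfl | hki
    · simp only [Pi.add_apply, Pi.sub_apply, Pi.single_eq_same, Pi.single_eq_of_ne hij,
        Finset.piecewise_eq_of_notMem _ _ _ hi, Finset.piecewise_eq_of_notMem _ _ _ hiS,
        Pi.zero_apply]
      ring
    · simp [*, Finset.piecewise]

lemma mem_of_sum_lt (hB : SpiralClosed B) (hx : x ∈ B) {i : Fin d} {y : ZLat d}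
    (hy : ∑ j, |y j| < |x i|) : y ∈ B := by
  obtain ⟨σ, hσ, hσx⟩ : ∃ σ : ℤ, (σ = 1 ∨ σ = -1) ∧ |x i| = σ * x i := by
    rcases abs_cases (x i) with ⟨h, -⟩ | ⟨h, -⟩
    exacts [⟨1, by simp [h]⟩, ⟨-1, by simp [h]⟩]
  have hσσ : σ * σ = 1 := by rcases hσ with rfl | rfl <;> rfl
  rw [hσx, ← Finset.add_sum_erase _ _ (Finset.mem_univ i)] at hy
  have hfill := hB.single_add_piecewise_mem (hB.single_mem hx i) hσ y
    (Finset.notMem_erase i Finset.univ) (by linarith [abs_nonneg (y i)])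
  convert hB.update_mem hfill (i := i) (c := y i) ?_ using 1
  · ext k
    rcases eq_or_ne k i with rfl | hk <;> simp [*]
  · set r := ∑ j ∈ Finset.univ.erase i, |y j|
    calc |y i| < σ * (x i - σ * r) := by linear_combination hy + r * hσσ
      _ ≤ |σ * (x i - σ * r)| := le_abs_self _
      _ = |x i - σ * r| := by
        rw [abs_mul, show |σ| = 1 by rcases hσ with rfl | rfl <;> rfl, one_mul]
      _ = _ := by simp

lemma natAbs_le_encard (hB : SpiralClosed B) (hx : x ∈ B) (i : Fin d) :
    ((x i).natAbs : ℕ∞) ≤ B.encard := by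
  have hinj : Function.Injective (fun n : ℕ ↦ Function.update x i (n : ℤ)) :=
    (Function.update_injective x i).comp Nat.cast_injective
  calc ((x i).natAbs : ℕ∞) = (Set.Iio (x i).natAbs).encard := by
        rw [← Finset.coe_Iio, Set.encard_coe_eq_coe_finsetCard, Nat.card_Iio]
    _ = ((fun n : ℕ ↦ Function.update x i (n : ℤ)) '' Set.Iio (x i).natAbs).encard :=
      (hinj.encard_image _).symm
    _ ≤ B.encard := Set.encard_le_encard <| Set.image_subset_iff.2 fun n hn ↦
      hB.update_mem hx (by
        rw [Nat.abs_cast, Int.abs_eq_natAbs]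
        exact_mod_cast hn)

end SpiralClosed

/-- The largest `L` with `(2 * L + 1) ^ d < N`, or `0` if there is none. A set of `N` lattice points
does not fit into a box of this radius. -/
def diamondRadius (d N : ℕ) : ℕ := Nat.findGreatest (fun L ↦ (2 * L + 1) ^ d < N) N

lemma tendsto_diamondRadius (d : ℕ) : Tendsto (diamondRadius d) atTop atTop := by
  refine tendsto_atTop.2 fun L ↦ ?_
  filter_upwards [eventually_gt_atTop ((2 * L + 1) ^ d), eventually_ge_atTop L] with N hN hLN
  exact Nat.le_findGreatest hLN hN

lemma encard_vboxI (d L : ℕ) : (VboxI d L).encard = ((2 * L + 1) ^ d : ℕ) := by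
  have hbox : VboxI d L = (Fintype.piFinset fun _ : Fin d ↦ Finset.Icc (-L : ℤ) L) := by
    ext y
    simp only [VboxI, abs_le, Set.mem_ofPred_eq, Finset.mem_coe, Fintype.mem_piFinset,
      Finset.mem_Icc]
  rw [hbox, Set.encard_coe_eq_coe_finsetCard, Fintype.card_piFinset_const, Int.card_Icc]
  congr 2
  omega

lemma SpiralClosed.vdiaI_subset {d N : ℕ} {B : Set (ZLat d)} (hB : SpiralClosed B)
    (hN : (N : ℕ∞) ≤ B.encard) (hN0 : N ≠ 0) : VdiaI d (diamondRadius d N) ⊆ B := by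
  intro y (hy : ∑ i, ((y i).natAbs : ℤ) ≤ diamondRadius d N)
  simp only [Int.natCast_natAbs] at hy
  rcases eq_or_ne (diamondRadius d N) 0 with h0 | h0
  · obtain ⟨x, hx⟩ : B.Nonempty := Set.one_le_encard_iff_nonempty.1 <|
      le_trans (by exact_mod_cast Nat.one_le_iff_ne_zero.2 hN0) hN
    have hy0 : y = 0 := by
      rw [h0, Nat.cast_zero, (Finset.sum_nonneg fun i _ ↦ abs_nonneg (y i)).ge_iff_eq',
        Finset.sum_eq_zero_iff_of_nonneg fun i _ ↦ abs_nonneg (y i)] at hy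
      ext i
      simpa using hy i
    rw [hy0]
    exact hB.zero_mem hx
  · have hfit : (2 * diamondRadius d N + 1) ^ d < N :=
      Nat.findGreatest_of_ne_zero (P := fun L ↦ (2 * L + 1) ^ d < N) rfl h0
    have hnot : ¬B ⊆ VboxI d (diamondRadius d N) := fun hsub ↦ by
      have := hN.trans ((Set.encard_le_encard hsub).trans_eq (encard_vboxI d _))
      rw [Nat.cast_le] at this
      omega
    obtain ⟨x, hx, hxbox⟩ := Set.not_subset.1 hnot
    obtain ⟨i, hi⟩ : ∃ i, (diamondRadius d N : ℤ) < |x i| := by simpa [VboxI] using hxbox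
    exact hB.mem_of_sum_lt hx (hy.trans_lt hi)

/-- Geometry of Schwarz symmetric functions: there exist L₁, L₂ : ℕ → ℕ depending only
on d with L₁(N) → ∞, such that for every Schwarz symmetric u with a_N(u) > 0,
V◇_{L₁(N)} ⊆ {u ≥ a_N(u)} and {u > a_{N+1}(u)} ⊆ V□_{L₂(N)}. -/
theorem stmt7 (d : ℕ) (hd : 2 ≤ d) :
    ∃ L₁ L₂ : ℕ → ℕ, Tendsto L₁ atTop atTop ∧
      ∀ N : ℕ, 1 ≤ N → ∀ u : ZLat d → NNReal, Admissible u → RZd d u = u →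
        0 < nthLargest u N →
        VdiaI d (L₁ N) ⊆ {x | nthLargest u N ≤ u x} ∧
        {x | nthLargest u (N + 1) < u x} ⊆ VboxI d (L₂ N) := by
  have : NeZero d := ⟨by omega⟩
  refine ⟨diamondRadius d, id, tendsto_diamondRadius d, fun N hN u hu hfix _ ↦ ⟨?_, ?_⟩⟩
  · intro y hy
    change nthLargest u N ≤ u y
    refine le_of_forall_lt fun t ht ↦ ?_
    rw [lt_nthLargest_iff hu.bddAbove_range (by omega)] at ht
    exact (spiralClosed_setOf_lt hu hfix t).vdiaI_subset ht (by omega) hy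
  · intro x hx i
    by_contra! hi
    rw [id_eq, Int.abs_eq_natAbs] at hi
    have hcard := (spiralClosed_setOf_lt hu hfix _).natAbs_le_encard hx i
    refine lt_irrefl (nthLargest u (N + 1)) <|
      (lt_nthLargest_iff hu.bddAbove_range N.succ_ne_zero).2 (le_trans ?_ hcard)
    exact_mod_cast hi

end
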